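/- For every complex number q with 0 < |q| < 1, one has ∑_{i,j,k,l ≥ 0} q^{2i²+2j²+2k²+2l²−2ij−2ik−2il+2jk+2jl−2i+j+2k} / ((q²;q²)_i (q²;q²)_j (q²;q²)_k (q²;q²)_l) = (1/(J_1 J_2 J_16)) · ( 2 J_8² J_{1,8} J_{6,16} / J_4 + J_4⁵ J_{3,8} J_{2,16} / (J_2² J_8²) ). -/

import Mathlib

open scoped BigOperators

/-- The infinite q-Pochhammer symbol `(a; q)_∞ = ∏_{k=0}^∞ (1 - a q^k)`. -/
noncomputable def qPochInf (a q : ℂ) : ℂ := ∏' n : ℕ, (1 - a * q ^ n)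

/-- The finite q-Pochhammer symbol `(a; q)_n = ∏_{k=0}^{n-1} (1 - a q^k)`. -/
noncomputable def qPoch (a q : ℂ) (n : ℕ) : ℂ :=
  Finset.prod (Finset.range n) (fun k => 1 - a * q ^ k)

/-- `J_m = (q^m; q^m)_∞`. -/
noncomputable def J (q : ℂ) (m : ℕ) : ℂ := qPochInf (q ^ m) (q ^ m)

/-- `J_{a,m} = (q^a; q^m)_∞ (q^{m-a}; q^m)_∞ (q^m; q^m)_∞`. -/
noncomputable def Jam (q : ℂ) (a m : ℕ) : ℂ :=
  qPochInf (q ^ a) (q ^ m) * qPochInf (q ^ (m - a)) (q ^ m) * qPochInf (q ^ m) (q ^ m)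

/-!
With `n = j + k + l`, the summand is a function of `i` and `n` times the `(j, k, l)` summand of the
`n`-th coefficient of a product of two power series in `X`. That product and the product
`∑ q^(a²+2a) X^a / (q²;q²)_a * ∑ q^b X^b / (q;q)_b` satisfy one and the same first order
`q²`-difference equation in `X`, so they agree, and the series becomes a triple sum over
`(i, a, b)`.

For fixed `b` the triple summand is a function of `a - i` times `p^(ai) / ((p;p)_a (p;p)_i)` with
`p = q²`, and by Durfee rectangles the latter sums to `1 / (p;p)_∞` along each line `a - i = c`.
What is left is a theta series, whose dependence on `b` is an elementary shift plus the parity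
of `b`. The two parities of `b` give the two terms of the right-hand side: each is a theta constant
times one of Slater's modulus 16 series, which are the even and the odd part of
`(-x; x²)_∞`, `x² = q`, and are evaluated by the triple and the quintuple product identities.
-/

open Filter Finset Topology

section QPochhammer

variable {p : ℂ}

theorem norm_pow_lt_one (hp : ‖p‖ < 1) {m : ℕ} (hm : m ≠ 0) : ‖p ^ m‖ < 1 := by
  rw [norm_pow]
  exact pow_lt_one₀ (norm_nonneg _) hp hm

theorem one_sub_pow_ne_zero (hp : ‖p‖ < 1) {n : ℕ} (hn : n ≠ 0) : 1 - p ^ n ≠ 0 := by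
  intro h
  simpa [← sub_eq_zero.mp h] using norm_pow_lt_one hp hn

theorem qPoch_zero (a p : ℂ) : qPoch a p 0 = 1 := prod_range_zero _

theorem qPoch_succ (a p : ℂ) (n : ℕ) : qPoch a p (n + 1) = qPoch a p n * (1 - a * p ^ n) :=
  prod_range_succ _ n

theorem qPoch_self_ne_zero (hp : ‖p‖ < 1) (n : ℕ) : qPoch p p n ≠ 0 := by
  refine prod_ne_zero_iff.mpr fun k _ => ?_
  rw [← pow_succ']
  exact one_sub_pow_ne_zero hp k.succ_ne_zero

theorem one_sub_pow_succ_div_qPoch_succ (hp : ‖p‖ < 1) (n : ℕ) :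
    (1 - p ^ (n + 1)) / qPoch p p (n + 1) = 1 / qPoch p p n := by
  have hn := qPoch_self_ne_zero hp n
  have hsucc := one_sub_pow_ne_zero hp n.succ_ne_zero
  rw [qPoch_succ, ← pow_succ']
  field_simp

theorem summable_norm_mul_pow (a : ℂ) (hp : ‖p‖ < 1) : Summable fun n : ℕ => ‖-(a * p ^ n)‖ := by
  simp only [norm_neg, norm_mul, norm_pow]
  exact (summable_geometric_of_lt_one (norm_nonneg _) hp).mul_left _

theorem tendsto_qPoch_qPochInf (a : ℂ) (hp : ‖p‖ < 1) :
    Tendsto (qPoch a p) atTop (𝓝 (qPochInf a p)) := by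
  have hprod : Multipliable fun n : ℕ => 1 - a * p ^ n := by
    simpa only [sub_eq_add_neg] using
      multipliable_one_add_of_summable (summable_norm_mul_pow a hp)
  exact hprod.hasProd.tendsto_prod_nat

theorem qPochInf_self_ne_zero (hp : ‖p‖ < 1) : qPochInf p p ≠ 0 := by
  simp only [qPochInf, sub_eq_add_neg]
  refine tprod_one_add_ne_zero_of_summable (fun n => ?_) (summable_norm_mul_pow p hp)
  rw [← sub_eq_add_neg, ← pow_succ']
  exact one_sub_pow_ne_zero hp n.succ_ne_zero

theorem exists_norm_inv_qPoch_self_le (hp : ‖p‖ < 1) :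
    ∃ C : ℝ, 0 ≤ C ∧ ∀ n, ‖(qPoch p p n)⁻¹‖ ≤ C := by
  obtain ⟨C, hC⟩ := ((tendsto_qPoch_qPochInf p hp).inv₀
    (qPochInf_self_ne_zero hp)).norm.bddAbove_range
  exact ⟨C, (norm_nonneg _).trans (hC ⟨0, rfl⟩), fun n => hC ⟨n, rfl⟩⟩

theorem qPochInf_eq_one_sub_mul (a : ℂ) (hp : ‖p‖ < 1) :
    qPochInf a p = (1 - a) * qPochInf (a * p) p := by
  refine tendsto_nhds_unique ((tendsto_qPoch_qPochInf a hp).comp (tendsto_add_atTop_nat 1))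
    (((tendsto_qPoch_qPochInf (a * p) hp).const_mul (1 - a)).congr fun n => ?_)
  simp only [Function.comp_apply, qPoch, prod_range_succ', pow_zero, mul_one, pow_succ', mul_assoc]
  exact mul_comm _ _

theorem qPochInf_one (hp : ‖p‖ < 1) : qPochInf 1 p = 0 := by
  rw [qPochInf_eq_one_sub_mul 1 hp, sub_self, zero_mul]

theorem qPoch_mul_eq_prod (a p : ℂ) (m n : ℕ) :
    qPoch a p (m * n) = ∏ r ∈ range m, qPoch (a * p ^ r) (p ^ m) n := by
  induction n with
  | zero => simp only [mul_zero, qPoch_zero, prod_const_one]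
  | succ n ih =>
    simp only [qPoch_succ, prod_mul_distrib, ← ih]
    rw [mul_add_one, qPoch, prod_range_add, ← qPoch]
    congr! 3 with r
    ring

theorem qPochInf_eq_prod (a : ℂ) (hp : ‖p‖ < 1) {m : ℕ} (hm : m ≠ 0) :
    qPochInf a p = ∏ r ∈ range m, qPochInf (a * p ^ r) (p ^ m) := by
  have hmul : Tendsto (fun n : ℕ => m * n) atTop atTop :=
    tendsto_id.const_mul_atTop' (Nat.pos_of_ne_zero hm)
  have hprod := tendsto_finsetProd (range m)
    fun r _ => tendsto_qPoch_qPochInf (a * p ^ r) (norm_pow_lt_one hp hm)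
  exact tendsto_nhds_unique ((tendsto_qPoch_qPochInf a hp).comp hmul)
    (hprod.congr fun n => (qPoch_mul_eq_prod a p m n).symm)

theorem qPochInf_mul_qPochInf_neg (a : ℂ) (hp : ‖p‖ < 1) :
    qPochInf a p * qPochInf (-a) p = qPochInf (a ^ 2) (p ^ 2) := by
  refine tendsto_nhds_unique
    ((tendsto_qPoch_qPochInf a hp).mul (tendsto_qPoch_qPochInf (-a) hp))
    ((tendsto_qPoch_qPochInf (a ^ 2) (norm_pow_lt_one hp two_ne_zero)).congr fun n => ?_)
  simp only [qPoch, ← prod_mul_distrib]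
  exact prod_congr rfl fun r _ => by ring

end QPochhammer

section Euler

variable {p : ℂ}

/-- The coefficient of `zⁿ` in the big `q`-exponential `∑ cⁿ p^(n(n-1)/2) zⁿ / (p; p)_n` of
base `p`, evaluated at `c z`. -/
noncomputable def bigQExpCoeff (p c : ℂ) (n : ℕ) : ℂ := c ^ n * p ^ n.choose 2 / qPoch p p n

theorem bigQExpCoeff_zero (p c : ℂ) : bigQExpCoeff p c 0 = 1 := by
  simp only [bigQExpCoeff, qPoch_zero, pow_zero, Nat.choose_zero_succ, mul_one, div_one]

theorem bigQExpCoeff_mul (p c r : ℂ) (n : ℕ) :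
    bigQExpCoeff p (c * r) n = r ^ n * bigQExpCoeff p c n := by
  simp only [bigQExpCoeff]
  ring

theorem one_sub_pow_succ_mul_bigQExpCoeff_succ (hp : ‖p‖ < 1) (c : ℂ) (n : ℕ) :
    (1 - p ^ (n + 1)) * bigQExpCoeff p c (n + 1) = c * p ^ n * bigQExpCoeff p c n := by
  simp only [bigQExpCoeff, Nat.choose_succ_succ', Nat.choose_one_right]
  linear_combination c ^ (n + 1) * p ^ (n + n.choose 2) * one_sub_pow_succ_div_qPoch_succ hp n

theorem summable_norm_bigQExpCoeff (hp : ‖p‖ < 1) (c : ℂ) :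
    Summable fun n => ‖bigQExpCoeff p c n‖ := by
  obtain ⟨C, -, hC⟩ := exists_norm_inv_qPoch_self_le hp
  have hratio : ∀ᶠ n : ℕ in atTop, ‖c * p ^ n‖ ≤ 1 / 2 := by
    have hlim := ((tendsto_pow_atTop_nhds_zero_of_norm_lt_one hp).const_mul c).norm
    rw [mul_zero, norm_zero] at hlim
    exact hlim.eventually_le_const (by norm_num)
  have hnum : Summable fun n : ℕ => ‖c ^ n * p ^ n.choose 2‖ := by
    refine summable_of_ratio_norm_eventually_le (r := 1 / 2) (by norm_num) ?_
    filter_upwards [hratio] with n hn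
    calc ‖‖c ^ (n + 1) * p ^ (n + 1).choose 2‖‖ = ‖c * p ^ n‖ * ‖‖c ^ n * p ^ n.choose 2‖‖ := by
          rw [norm_norm, norm_norm, ← norm_mul, Nat.choose_succ_succ', Nat.choose_one_right]
          ring_nf
      _ ≤ 1 / 2 * ‖‖c ^ n * p ^ n.choose 2‖‖ := by gcongr
  refine (hnum.mul_right C).of_nonneg_of_le (fun n => norm_nonneg _) fun n => ?_
  rw [bigQExpCoeff, div_eq_mul_inv, norm_mul]
  exact mul_le_mul_of_nonneg_left (hC n) (norm_nonneg _)

theorem tsum_bigQExpCoeff_eq_one_add_mul (hp : ‖p‖ < 1) (c : ℂ) :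
    ∑' n, bigQExpCoeff p c n = (1 + c) * ∑' n, bigQExpCoeff p (c * p) n := by
  have hs := (summable_norm_bigQExpCoeff hp c).of_norm
  have hs' := (summable_norm_bigQExpCoeff hp (c * p)).of_norm
  suffices ∑' n, bigQExpCoeff p c n - ∑' n, bigQExpCoeff p (c * p) n =
      c * ∑' n, bigQExpCoeff p (c * p) n by linear_combination this
  rw [← hs.tsum_sub hs', (hs.sub hs').tsum_eq_zero_add, ← tsum_mul_left, bigQExpCoeff_zero,
    bigQExpCoeff_zero, sub_self, zero_add]
  refine tsum_congr fun n => ?_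
  rw [bigQExpCoeff_mul, bigQExpCoeff_mul]
  linear_combination one_sub_pow_succ_mul_bigQExpCoeff_succ hp c n

theorem tendsto_tsum_bigQExpCoeff_mul_pow (hp : ‖p‖ < 1) (c : ℂ) :
    Tendsto (fun n : ℕ => ∑' k, bigQExpCoeff p (c * p ^ n) k) atTop (𝓝 1) := by
  rw [← tsum_ite_eq (0 : ℕ) (fun _ => (1 : ℂ))]
  refine tendsto_tsum_of_dominated_convergence (summable_norm_bigQExpCoeff hp c) (fun k => ?_)
    (Eventually.of_forall fun n k => ?_)
  · simp only [bigQExpCoeff_mul, pow_right_comm p _ k]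
    rcases eq_or_ne k 0 with rfl | hk
    · simp only [pow_zero, one_pow, one_mul, bigQExpCoeff_zero, if_true, tendsto_const_nhds]
    · simpa only [hk, if_false, zero_mul] using
        (tendsto_pow_atTop_nhds_zero_of_norm_lt_one (norm_pow_lt_one hp hk)).mul_const
          (bigQExpCoeff p c k)
  · rw [bigQExpCoeff_mul, norm_mul, norm_pow, norm_pow]
    exact mul_le_of_le_one_left (norm_nonneg _)
      (pow_le_one₀ (by positivity) (pow_le_one₀ (norm_nonneg _) hp.le))

theorem hasSum_bigQExpCoeff_neg (hp : ‖p‖ < 1) (z : ℂ) :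
    HasSum (bigQExpCoeff p (-z)) (qPochInf z p) := by
  have hiter : ∀ n : ℕ, qPoch z p n * ∑' k, bigQExpCoeff p (-z * p ^ n) k =
      ∑' k, bigQExpCoeff p (-z) k := by
    intro n
    induction n with
    | zero => rw [qPoch_zero, one_mul, pow_zero, mul_one]
    | succ n ih =>
      rw [← ih, tsum_bigQExpCoeff_eq_one_add_mul hp (-z * p ^ n), qPoch_succ, pow_succ]
      ring_nf
  have hlim := (tendsto_qPoch_qPochInf z hp).mul (tendsto_tsum_bigQExpCoeff_mul_pow hp (-z))
  simp only [hiter, mul_one] at hlim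
  rw [tendsto_nhds_unique hlim tendsto_const_nhds]
  exact (summable_norm_bigQExpCoeff hp (-z)).of_norm.hasSum

end Euler

section DurfeeRectangles

variable {p : ℂ}

/-- The generating function `p^(ab) / ((p; p)_a (p; p)_b)` of the partitions with Durfee
rectangle of sides `a` and `b`. -/
noncomputable def durfeeTerm (p : ℂ) (a b : ℕ) : ℂ := p ^ (a * b) / (qPoch p p a * qPoch p p b)

theorem durfeeTerm_comm (p : ℂ) (a b : ℕ) : durfeeTerm p a b = durfeeTerm p b a := by
  rw [durfeeTerm, durfeeTerm, mul_comm a, mul_comm (qPoch p p a)]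

theorem one_sub_pow_succ_mul_durfeeTerm (hp : ‖p‖ < 1) (a b : ℕ) :
    (1 - p ^ (a + 1)) * durfeeTerm p (a + 1) b = p ^ b * durfeeTerm p a b := by
  simp only [durfeeTerm]
  linear_combination
    p ^ b * p ^ (a * b) / qPoch p p b * one_sub_pow_succ_div_qPoch_succ hp a

theorem exists_norm_durfeeTerm_le (hp : ‖p‖ < 1) :
    ∃ C : ℝ, ∀ m i, ‖durfeeTerm p i (i + m)‖ ≤ ‖p‖ ^ i * C := by
  obtain ⟨C, hC0, hC⟩ := exists_norm_inv_qPoch_self_le hp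
  refine ⟨C * C, fun m i => ?_⟩
  have hexp : i ≤ i * (i + m) :=
    (Nat.le_mul_self i).trans (Nat.mul_le_mul_left i (i.le_add_right m))
  rw [durfeeTerm, div_eq_mul_inv, mul_inv, norm_mul, norm_mul, norm_pow]
  exact mul_le_mul (pow_le_pow_of_le_one (norm_nonneg p) hp.le hexp)
    (mul_le_mul (hC i) (hC _) (norm_nonneg _) hC0) (by positivity) (by positivity)

theorem summable_durfeeTerm (hp : ‖p‖ < 1) (m : ℕ) :
    Summable fun i => durfeeTerm p i (i + m) := by
  obtain ⟨C, hC⟩ := exists_norm_durfeeTerm_le hp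
  exact .of_norm_bounded ((summable_geometric_of_lt_one (norm_nonneg p) hp).mul_right C) (hC m)

theorem summable_pow_mul_durfeeTerm (hp : ‖p‖ < 1) (m : ℕ) :
    Summable fun i => p ^ i * durfeeTerm p i (i + m) := by
  refine .of_norm_bounded (summable_durfeeTerm hp m).norm fun i => ?_
  rw [norm_mul, norm_pow]
  exact mul_le_of_le_one_left (norm_nonneg _) (pow_le_one₀ (norm_nonneg p) hp.le)

theorem tsum_durfeeTerm_add_one (hp : ‖p‖ < 1) (m : ℕ) :
    ∑' i, durfeeTerm p i (i + m) = ∑' i, durfeeTerm p i (i + (m + 1)) := by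
  have hleft : ∑' i, durfeeTerm p i (i + m) - ∑' i, p ^ i * durfeeTerm p i (i + m) =
      p ^ (m + 1) * ∑' i, p ^ i * durfeeTerm p i (i + (m + 1)) := by
    rw [← (summable_durfeeTerm hp m).tsum_sub (summable_pow_mul_durfeeTerm hp m),
      ((summable_durfeeTerm hp m).sub (summable_pow_mul_durfeeTerm hp m)).tsum_eq_zero_add,
      pow_zero, one_mul, sub_self, zero_add, ← tsum_mul_left]
    refine tsum_congr fun i => ?_
    rw [show i + 1 + m = i + (m + 1) by ring]
    linear_combination one_sub_pow_succ_mul_durfeeTerm hp i (i + (m + 1))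
  have hright : ∑' i, durfeeTerm p i (i + (m + 1)) -
      p ^ (m + 1) * ∑' i, p ^ i * durfeeTerm p i (i + (m + 1)) =
      ∑' i, p ^ i * durfeeTerm p i (i + m) := by
    rw [← tsum_mul_left, ← (summable_durfeeTerm hp (m + 1)).tsum_sub
      ((summable_pow_mul_durfeeTerm hp (m + 1)).mul_left _)]
    refine tsum_congr fun i => ?_
    rw [← add_assoc i, durfeeTerm_comm p i, durfeeTerm_comm p i]
    linear_combination one_sub_pow_succ_mul_durfeeTerm hp (i + m) i
  linear_combination hleft - hright

theorem tendsto_tsum_durfeeTerm (hp : ‖p‖ < 1) :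
    Tendsto (fun m => ∑' i, durfeeTerm p i (i + m)) atTop (𝓝 (qPochInf p p)⁻¹) := by
  obtain ⟨C, hC⟩ := exists_norm_durfeeTerm_le hp
  rw [← tsum_ite_eq (0 : ℕ) fun _ => (qPochInf p p)⁻¹]
  refine tendsto_tsum_of_dominated_convergence
    ((summable_geometric_of_lt_one (norm_nonneg p) hp).mul_right C) (fun i => ?_)
    (Eventually.of_forall fun m i => hC m i)
  have hpow : Tendsto (fun m : ℕ => (p ^ i) ^ m) atTop (𝓝 (if i = 0 then 1 else 0)) := by
    rcases eq_or_ne i 0 with rfl | hi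
    · simp only [pow_zero, one_pow, if_true, tendsto_const_nhds]
    · simpa only [hi, if_false] using
        tendsto_pow_atTop_nhds_zero_of_norm_lt_one (norm_pow_lt_one hp hi)
  have hinv := ((tendsto_qPoch_qPochInf p hp).comp (tendsto_add_atTop_nat i)).inv₀
    (qPochInf_self_ne_zero hp)
  convert (hpow.mul_const (p ^ (i * i) / qPoch p p i)).mul hinv using 1
  · ext m
    simp only [durfeeTerm, Function.comp_apply, add_comm m i]
    ring
  · split_ifs with hi
    · rw [hi, qPoch_zero, mul_zero, pow_zero, div_one, one_mul, one_mul]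
    · rw [zero_mul, zero_mul]

theorem tsum_durfeeTerm (hp : ‖p‖ < 1) (m : ℕ) :
    ∑' i, durfeeTerm p i (i + m) = (qPochInf p p)⁻¹ := by
  have hconst : ∀ m, ∑' i, durfeeTerm p i (i + m) = ∑' i, durfeeTerm p i (i + 0) :=
    Nat.rec rfl fun m ih => (tsum_durfeeTerm_add_one hp m).symm.trans ih
  have hlim := tendsto_tsum_durfeeTerm hp
  simp only [hconst] at hlim
  rw [hconst m, tendsto_nhds_unique hlim tendsto_const_nhds]

/-- The equivalence sending a pair of natural numbers to its difference and its minimum. -/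
def subMinEquiv : ℕ × ℕ ≃ ℤ × ℕ where
  toFun x := ((x.1 : ℤ) - x.2, min x.1 x.2)
  invFun y := (y.2 + y.1.toNat, y.2 + (-y.1).toNat)
  left_inv x := by ext <;> simp only <;> omega
  right_inv y := by ext <;> simp only <;> omega

theorem hasSum_durfeeTerm (hp : ‖p‖ < 1) (d : ℤ) :
    HasSum (fun i => durfeeTerm p (i + d.toNat) (i + (-d).toNat)) (qPochInf p p)⁻¹ := by
  have hnat (m : ℕ) : HasSum (fun i => durfeeTerm p i (i + m)) (qPochInf p p)⁻¹ :=
    tsum_durfeeTerm hp m ▸ (summable_durfeeTerm hp m).hasSum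
  obtain ⟨m, rfl | rfl⟩ := d.eq_nat_or_neg
  · simpa only [durfeeTerm_comm p (_ + _), Int.toNat_natCast, Int.toNat_neg_natCast, add_zero]
      using hnat m
  · simpa only [neg_neg, Int.toNat_natCast, Int.toNat_neg_natCast, add_zero] using hnat m

theorem hasSum_of_sub_mul_durfeeTerm (hp : ‖p‖ < 1) {F : ℤ → ℂ} {s : ℂ}
    (hF : HasSum (fun x : ℕ × ℕ => F (x.1 - x.2) * durfeeTerm p x.1 x.2) s) :
    HasSum F (s * qPochInf p p) := by
  have hsub (y : ℤ × ℕ) : ((subMinEquiv.symm y).1 : ℤ) - (subMinEquiv.symm y).2 = y.1 :=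
    congrArg Prod.fst (subMinEquiv.apply_symm_apply y)
  rw [← subMinEquiv.symm.hasSum_iff] at hF
  simp only [Function.comp_def, hsub] at hF
  have hsum := (hF.prod_fiberwise fun d => (hasSum_durfeeTerm hp d).mul_left (F d)).mul_right
    (qPochInf p p)
  simpa only [inv_mul_cancel_right₀ (qPochInf_self_ne_zero hp)] using hsum

end DurfeeRectangles

section Theta

theorem two_mul_ediv_two_mul_pred (n : ℤ) : 2 * (n * (n - 1) / 2) = n * (n - 1) :=
  Int.mul_ediv_cancel' (Int.even_mul_pred_self n).two_dvd

variable {p z : ℂ}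

/-- The general term `(-z)ⁿ p^(n(n-1)/2)` of the bilateral theta series in Jacobi's triple
product identity. -/
noncomputable def thetaTerm (z p : ℂ) (n : ℤ) : ℂ := (-z) ^ n * p ^ (n * (n - 1) / 2)

theorem thetaTerm_ne_zero (hp0 : p ≠ 0) (hz : z ≠ 0) (n : ℤ) : thetaTerm z p n ≠ 0 :=
  mul_ne_zero (zpow_ne_zero _ (neg_ne_zero.mpr hz)) (zpow_ne_zero _ hp0)

theorem thetaTerm_zero (z p : ℂ) : thetaTerm z p 0 = 1 := by
  rw [thetaTerm, zero_mul, Int.zero_ediv, zpow_zero, zpow_zero, one_mul]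

theorem thetaTerm_one (z p : ℂ) : thetaTerm z p 1 = -z := by
  rw [thetaTerm, sub_self, mul_zero, Int.zero_ediv, zpow_zero, zpow_one, mul_one]

theorem thetaTerm_two (z p : ℂ) : thetaTerm z p 2 = p * z ^ 2 := by
  norm_num [thetaTerm, mul_comm p]

theorem thetaTerm_three (z p : ℂ) : thetaTerm z p 3 = -(p ^ 3 * z ^ 3) := by
  norm_num [thetaTerm, mul_comm (p ^ 3)]
  ring

theorem thetaTerm_add (hp0 : p ≠ 0) (hz : z ≠ 0) (m n : ℤ) :
    thetaTerm z p (m + n) = thetaTerm z p m * thetaTerm z p n * p ^ (m * n) := by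
  have hexp : (m + n) * (m + n - 1) / 2 = m * (m - 1) / 2 + n * (n - 1) / 2 + m * n := by
    linarith [two_mul_ediv_two_mul_pred (m + n), two_mul_ediv_two_mul_pred m,
      two_mul_ediv_two_mul_pred n]
  rw [thetaTerm, hexp, zpow_add₀ (neg_ne_zero.mpr hz), zpow_add₀ hp0, zpow_add₀ hp0, thetaTerm,
    thetaTerm]
  ring

theorem thetaTerm_neg (hp0 : p ≠ 0) (z : ℂ) (n : ℤ) :
    thetaTerm z p (-n) = thetaTerm (p / z) p n := by
  have hexp : -n * (-n - 1) / 2 = n + n * (n - 1) / 2 := by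
    linarith [two_mul_ediv_two_mul_pred (-n), two_mul_ediv_two_mul_pred n]
  rw [thetaTerm, thetaTerm, hexp, zpow_add₀ hp0, ← mul_assoc, zpow_neg, ← inv_zpow, ← mul_zpow,
    inv_neg, neg_mul, inv_mul_eq_div]

theorem thetaTerm_mul_left (r z p : ℂ) (n : ℤ) :
    thetaTerm (r * z) p n = r ^ n * thetaTerm z p n := by
  rw [thetaTerm, thetaTerm, ← mul_neg, mul_zpow, mul_assoc]

theorem thetaTerm_mul_thetaTerm (z w p r : ℂ) (n : ℤ) :
    thetaTerm z p n * thetaTerm w r n = thetaTerm (-(z * w)) (p * r) n := by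
  rw [thetaTerm, thetaTerm, thetaTerm, neg_neg, ← neg_mul_neg z, mul_zpow, mul_zpow,
    mul_mul_mul_comm]

theorem thetaTerm_mul (hp0 : p ≠ 0) (z : ℂ) (m : ℕ) (n : ℤ) :
    thetaTerm z p (m * n) = thetaTerm (-thetaTerm z p m) (p ^ m ^ 2) n := by
  have hexp : m * n * (m * n - 1) / 2 = m * (m - 1) / 2 * n + m ^ 2 * (n * (n - 1) / 2) := by
    linarith [two_mul_ediv_two_mul_pred (m * n), congrArg (· * n) (two_mul_ediv_two_mul_pred m),
      congrArg ((m : ℤ) ^ 2 * ·) (two_mul_ediv_two_mul_pred n)]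
  rw [thetaTerm, hexp, zpow_add₀ hp0, thetaTerm, neg_neg, thetaTerm, mul_zpow, ← zpow_mul,
    ← zpow_mul, mul_assoc, ← zpow_natCast p (m ^ 2), ← zpow_mul, Nat.cast_pow]

theorem thetaTerm_mul_add (hp0 : p ≠ 0) (hz : z ≠ 0) (m : ℕ) (n r : ℤ) :
    thetaTerm z p (m * n + r) =
      thetaTerm z p r * thetaTerm (-(p ^ (m * r) * thetaTerm z p m)) (p ^ m ^ 2) n := by
  rw [thetaTerm_add hp0 hz, thetaTerm_mul hp0, ← mul_neg, thetaTerm_mul_left, ← zpow_mul,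
    mul_right_comm (m : ℤ)]
  ring

theorem bigQExpCoeff_mul_bigQExpCoeff (hp0 : p ≠ 0) (hz : z ≠ 0) (a b : ℕ) :
    bigQExpCoeff p (-z) a * bigQExpCoeff p (-(p / z)) b =
      thetaTerm z p (a - b) * durfeeTerm p a b := by
  have hnat (z : ℂ) (n : ℕ) : bigQExpCoeff p (-z) n = thetaTerm z p n / qPoch p p n := by
    have hexp : (n : ℤ) * (n - 1) / 2 = n.choose 2 := by
      rw [Nat.choose_two_right]
      cases n <;> simp
    rw [bigQExpCoeff, thetaTerm, hexp, zpow_natCast, zpow_natCast]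
  rw [hnat, hnat, ← thetaTerm_neg hp0, sub_eq_add_neg, thetaTerm_add hp0 hz, durfeeTerm, mul_neg,
    zpow_neg, ← Nat.cast_mul, zpow_natCast]
  field_simp

/-- The theta function `(z; p)_∞ (p/z; p)_∞ (p; p)_∞`. -/
noncomputable def qTheta (z p : ℂ) : ℂ := qPochInf z p * qPochInf (p / z) p * qPochInf p p

theorem hasSum_thetaTerm (hp0 : p ≠ 0) (hp : ‖p‖ < 1) (hz : z ≠ 0) :
    HasSum (thetaTerm z p) (qTheta z p) := by
  have hsum := summable_mul_of_summable_norm (summable_norm_bigQExpCoeff hp (-z))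
    (summable_norm_bigQExpCoeff hp (-(p / z)))
  have hprod := (hasSum_bigQExpCoeff_neg hp z).mul (hasSum_bigQExpCoeff_neg hp (p / z)) hsum
  simp only [bigQExpCoeff_mul_bigQExpCoeff hp0 hz] at hprod
  exact hasSum_of_sub_mul_durfeeTerm hp hprod

theorem qTheta_div (hp0 : p ≠ 0) (z : ℂ) : qTheta (p / z) p = qTheta z p := by
  rw [qTheta, qTheta, div_div_cancel₀ hp0, mul_comm (qPochInf (p / z) p)]

theorem qTheta_one (hp : ‖p‖ < 1) : qTheta 1 p = 0 := by
  rw [qTheta, qPochInf_one hp, zero_mul, zero_mul]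

theorem qTheta_self_pow_three (hp0 : p ≠ 0) (hp : ‖p‖ < 1) : qTheta p (p ^ 3) = qPochInf p p := by
  rw [qPochInf_eq_prod p hp three_ne_zero, prod_range_succ, prod_range_succ, prod_range_one, qTheta,
    pow_zero, mul_one, pow_one, ← pow_succ', ← sq, pow_succ p 2, mul_div_cancel_right₀ _ hp0]

theorem Jam_eq_qTheta {q : ℂ} (hq0 : q ≠ 0) {a m : ℕ} (ham : a ≤ m) :
    Jam q a m = qTheta (q ^ a) (q ^ m) := by
  rw [Jam, qTheta, pow_sub₀ q hq0 ham, div_eq_mul_inv]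

theorem thetaTerm_mul_qTheta (hp0 : p ≠ 0) (hp : ‖p‖ < 1) (hz : z ≠ 0) (n : ℤ) :
    thetaTerm z p n * qTheta (p ^ n * z) p = qTheta z p := by
  have hshift := (hasSum_thetaTerm hp0 hp (mul_ne_zero (zpow_ne_zero n hp0) hz)).mul_left
    (thetaTerm z p n)
  have hterm : (fun k => thetaTerm z p n * thetaTerm (p ^ n * z) p k) =
      thetaTerm z p ∘ Equiv.addLeft n := by
    ext k
    rw [Function.comp_apply, Equiv.coe_addLeft, thetaTerm_add hp0 hz, thetaTerm_mul_left,
      ← zpow_mul]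
    ring
  rw [hterm] at hshift
  exact ((Equiv.addLeft n).hasSum_iff.mp hshift).unique (hasSum_thetaTerm hp0 hp hz)

theorem eq_sum_of_hasSum_residues {m : ℕ} [NeZero m] {f : ℤ → ℂ} {s : ℂ} {g : Fin m → ℂ}
    (hf : HasSum f s) (hg : ∀ r : Fin m, HasSum (fun t : ℤ => f (m * t + r)) (g r)) :
    s = ∑ r, g r := by
  have hprod := ((Equiv.prodComm (Fin m) ℤ).trans (Int.divModEquiv m).symm).hasSum_iff.mpr hf
  refine (hprod.prod_fiberwise fun r => ?_).unique (hasSum_fintype g)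
  convert hg r using 2 with t
  simp only [Function.comp_apply, Equiv.trans_apply, Equiv.prodComm_apply, Prod.swap,
    Int.divModEquiv_symm_apply, mul_comm (m : ℤ)]

theorem qTheta_eq_sum (hp0 : p ≠ 0) (hp : ‖p‖ < 1) (hz : z ≠ 0) (m : ℕ) [NeZero m] :
    qTheta z p = ∑ r : Fin m, thetaTerm z p r *
      qTheta (-(p ^ (m * (r : ℕ)) * thetaTerm z p m)) (p ^ m ^ 2) := by
  refine eq_sum_of_hasSum_residues (hasSum_thetaTerm hp0 hp hz) fun r => ?_
  simp only [thetaTerm_mul_add hp0 hz]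
  refine (hasSum_thetaTerm (pow_ne_zero _ hp0)
    (norm_pow_lt_one hp (pow_ne_zero _ (NeZero.ne m))) ?_).mul_left _
  exact neg_ne_zero.mpr (mul_ne_zero (zpow_ne_zero _ hp0) (thetaTerm_ne_zero hp0 hz _))

theorem qTheta_dissect (hp0 : p ≠ 0) (hp : ‖p‖ < 1) (hz : z ≠ 0) :
    qTheta z p = qTheta (-(p * z ^ 2)) (p ^ 4) - z * qTheta (-(p ^ 3 * z ^ 2)) (p ^ 4) := by
  rw [qTheta_eq_sum hp0 hp hz 2, Fin.sum_univ_two]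
  norm_num [thetaTerm_zero, thetaTerm_one, thetaTerm_two]
  ring_nf
theorem thetaTerm_sub_mul_thetaTerm (hp0 : p ≠ 0) (hz : z ≠ 0) (n b : ℤ) :
    thetaTerm z p (n - 2 * b) * thetaTerm (p * z ^ 2) (p ^ 2) b =
      thetaTerm z p n * thetaTerm (p ^ (4 - 2 * n)) (p ^ 6) b := by
  have hdissect := thetaTerm_mul_add hp0 hz 2 (-b) n
  rw [thetaTerm_neg (pow_ne_zero _ hp0), Nat.cast_ofNat, thetaTerm_two,
    show 2 * -b + n = n - 2 * b by ring] at hdissect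
  rw [hdissect, mul_assoc, thetaTerm_mul_thetaTerm, ← pow_add, zpow_sub₀ hp0]
  congr 2
  · field_simp
    norm_cast

theorem thetaTerm_mul_qTheta_six (hp0 : p ≠ 0) (hp : ‖p‖ < 1) (hz : z ≠ 0) (t r : ℤ) :
    thetaTerm z p (3 * t + r) * qTheta (p ^ (4 - 2 * (3 * t + r))) (p ^ 6) =
      thetaTerm z p r * qTheta (p ^ (4 - 2 * r)) (p ^ 6) *
        thetaTerm (-(p ^ (r + 1) * z ^ 3)) (p ^ 3) t := by
  have hp6 : p ^ 6 ≠ 0 := pow_ne_zero 6 hp0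
  have hdissect : thetaTerm z p (3 * t + r) = thetaTerm z p r *
      (thetaTerm (p ^ (4 - 2 * r)) (p ^ 6) (-t) *
        thetaTerm (-(p ^ (r + 1) * z ^ 3)) (p ^ 3) t) := by
    rw [thetaTerm_neg hp6, thetaTerm_mul_thetaTerm, ← pow_add, ← Nat.cast_ofNat (n := 3),
      thetaTerm_mul_add hp0 hz, Nat.cast_ofNat, thetaTerm_three]
    congr 2
    rw [zpow_sub₀ hp0, zpow_add_one₀ hp0, mul_comm 3 r, mul_comm 2 r, zpow_mul, zpow_mul]
    norm_cast
    field_simp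
  have hshift := thetaTerm_mul_qTheta hp6 (norm_pow_lt_one hp (by norm_num))
    (zpow_ne_zero (4 - 2 * r) hp0) (-t)
  rw [← zpow_natCast p 6, ← zpow_mul, ← zpow_add₀ hp0, zpow_natCast, Nat.cast_ofNat,
    show 6 * -t + (4 - 2 * r) = 4 - 2 * (3 * t + r) by ring] at hshift
  rw [hdissect, ← hshift]
  ring

theorem hasSum_thetaTerm_mul_qTheta_six (hp0 : p ≠ 0) (hp : ‖p‖ < 1) (hz : z ≠ 0) :
    HasSum (fun n => thetaTerm z p n * qTheta (p ^ (4 - 2 * n)) (p ^ 6))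
      (qTheta (p * z ^ 2) (p ^ 2) * qTheta z p) := by
  have htheta := hasSum_thetaTerm hp0 hp hz
  have htheta2 := hasSum_thetaTerm (pow_ne_zero 2 hp0) (norm_pow_lt_one hp two_ne_zero)
    (mul_ne_zero hp0 (pow_ne_zero 2 hz))
  have hprod := htheta2.mul htheta
    (summable_mul_of_summable_norm htheta2.summable.norm htheta.summable.norm)
  rw [← ((Equiv.prodComm ℤ ℤ).trans
    (Equiv.prodShear (Equiv.refl ℤ) fun b => Equiv.subRight (2 * b))).hasSum_iff] at hprod
  refine hprod.prod_fiberwise fun n => ?_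
  simp only [Function.comp_apply, Equiv.trans_apply, Equiv.prodComm_apply, Prod.swap_prod_mk,
    Equiv.prodShear_apply, Equiv.refl_apply, Equiv.subRight_apply, mul_comm (thetaTerm _ (p ^ 2) _),
    thetaTerm_sub_mul_thetaTerm hp0 hz]
  exact (hasSum_thetaTerm (pow_ne_zero 6 hp0) (norm_pow_lt_one hp (by norm_num))
    (zpow_ne_zero (4 - 2 * n) hp0)).mul_left (thetaTerm z p n)

theorem qTheta_mul_qTheta (hp0 : p ≠ 0) (hp : ‖p‖ < 1) (hz : z ≠ 0) :
    qTheta z p * qTheta (p * z ^ 2) (p ^ 2) = qPochInf (p ^ 2) (p ^ 2) *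
      (qTheta (-(p * z ^ 3)) (p ^ 3) - z * qTheta (-(p ^ 2 * z ^ 3)) (p ^ 3)) := by
  have hp6 : ‖p ^ 6‖ < 1 := norm_pow_lt_one hp (by norm_num)
  have hresidue (r : Fin 3) := (hasSum_thetaTerm (z := -(p ^ (r + 1 : ℤ) * z ^ 3))
    (pow_ne_zero 3 hp0) (norm_pow_lt_one hp three_ne_zero)
    (neg_ne_zero.mpr (mul_ne_zero (zpow_ne_zero _ hp0) (pow_ne_zero 3 hz)))).mul_left
    (thetaTerm z p r * qTheta (p ^ (4 - 2 * (r : ℤ))) (p ^ 6))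
  simp only [← thetaTerm_mul_qTheta_six hp0 hp hz] at hresidue
  have hsum := eq_sum_of_hasSum_residues (hasSum_thetaTerm_mul_qTheta_six hp0 hp hz) hresidue
  have htwo : qTheta (p ^ 2) (p ^ 6) = qPochInf (p ^ 2) (p ^ 2) := by
    rw [← qTheta_self_pow_three (pow_ne_zero 2 hp0) (norm_pow_lt_one hp two_ne_zero), ← pow_mul]
  have hfour : qTheta (p ^ 4) (p ^ 6) = qPochInf (p ^ 2) (p ^ 2) := by
    rw [← htwo, ← qTheta_div (pow_ne_zero 6 hp0) (p ^ 2), pow_add p 4 2,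
      mul_div_cancel_right₀ _ (pow_ne_zero 2 hp0)]
  rw [mul_comm, hsum, Fin.sum_univ_three]
  norm_num [thetaTerm_zero, thetaTerm_one, qTheta_one hp6]
  rw [htwo, hfour]
  ring

theorem mul_qTheta_mul_self (hp0 : p ≠ 0) (hp : ‖p‖ < 1) (hz : z ≠ 0) :
    z * qTheta (p * z) p = -qTheta z p := by
  rw [← thetaTerm_mul_qTheta hp0 hp hz 1, thetaTerm_one, zpow_one, neg_mul, neg_neg]

theorem qTheta_neg_self (hp0 : p ≠ 0) (hp : ‖p‖ < 1) :
    qTheta (-p) p = 2 * qPochInf (p ^ 2) (p ^ 2) ^ 2 / qPochInf p p := by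
  rw [eq_div_iff (qPochInf_self_ne_zero hp), ← qPochInf_mul_qPochInf_neg p hp, qTheta,
    div_neg_self hp0, qPochInf_eq_one_sub_mul (-1) hp, neg_one_mul]
  ring

theorem qTheta_neg_sq (hp0 : p ≠ 0) (hp : ‖p‖ < 1) :
    qTheta (-p) (p ^ 2) = qPochInf (p ^ 2) (p ^ 2) ^ 5 /
      (qPochInf p p ^ 2 * qPochInf (p ^ 4) (p ^ 4) ^ 2) := by
  have hp2 := norm_pow_lt_one hp two_ne_zero
  have hp4 := norm_pow_lt_one hp four_ne_zero
  have hneg := qPochInf_mul_qPochInf_neg p hp2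
  have hsplit := qPochInf_eq_prod p hp two_ne_zero
  have hsplit2 := qPochInf_eq_prod (p ^ 2) hp2 two_ne_zero
  rw [prod_range_succ, prod_range_one, pow_zero, mul_one, pow_one, ← sq] at hsplit hsplit2
  simp only [← pow_mul, Nat.reduceMul] at hneg hsplit2
  rw [← hneg] at hsplit2
  rw [eq_div_iff (by simp [qPochInf_self_ne_zero hp, qPochInf_self_ne_zero hp4]), qTheta, hsplit,
    sq p, mul_div_assoc, div_neg_self hp0, mul_neg_one, ← sq p]
  linear_combination (exp := 1) -qPochInf (p ^ 2) (p ^ 2) ^ 3 * (qPochInf (p ^ 2) (p ^ 2) +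
    qPochInf p (p ^ 2) * qPochInf (-p) (p ^ 2) * qPochInf (p ^ 4) (p ^ 4)) * hsplit2

end Theta

section Slater

theorem J_ne_zero {q : ℂ} (hq : ‖q‖ < 1) {m : ℕ} (hm : m ≠ 0) : J q m ≠ 0 :=
  qPochInf_self_ne_zero (norm_pow_lt_one hq hm)

theorem qPochInf_neg_mul_qPochInf_sq {x : ℂ} (hx0 : x ≠ 0) (hx : ‖x‖ < 1) :
    qPochInf (-x) (x ^ 2) * qPochInf (x ^ 2) (x ^ 2) =
      qTheta (-x ^ 22) (x ^ 48) - x ^ 2 * qTheta (-x ^ 10) (x ^ 48) +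
        x * (qTheta (-x ^ 34) (x ^ 48) - x ^ 4 * qTheta (-x ^ 46) (x ^ 48)) := by
  have hneg : ‖-x‖ < 1 := by rwa [norm_neg]
  have hsplit := qPochInf_eq_prod (-x) hneg two_ne_zero
  rw [prod_range_succ, prod_range_one, pow_zero, mul_one, pow_one, neg_mul_neg, ← sq, neg_sq]
    at hsplit
  have hfirst := qTheta_dissect (pow_ne_zero 3 (neg_ne_zero.mpr hx0))
    (norm_pow_lt_one hneg three_ne_zero) (neg_ne_zero.mpr hx0)
  have h12 : ‖x ^ 12‖ < 1 := norm_pow_lt_one hx (by norm_num)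
  have heven := qTheta_dissect (pow_ne_zero 12 hx0) h12 (pow_ne_zero 5 hx0)
  have hodd := qTheta_dissect (pow_ne_zero 12 hx0) h12 (pow_ne_zero 11 hx0)
  have hshift := mul_qTheta_mul_self (z := -x ^ 10) (pow_ne_zero 48 hx0)
    (norm_pow_lt_one hx (by norm_num)) (neg_ne_zero.mpr (pow_ne_zero 10 hx0))
  rw [← hsplit, ← qTheta_self_pow_three (neg_ne_zero.mpr hx0) hneg, hfirst]
  ring_nf at heven hodd hshift ⊢
  linear_combination heven + x * hodd + x ^ 2 * hshift

theorem Jam_mul_Jam {q : ℂ} (hq0 : q ≠ 0) (hq : ‖q‖ < 1) {s : ℕ} (hs : s ≤ 4) :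
    Jam q s 8 * Jam q (8 - 2 * s) 16 = J q 16 *
      (qTheta (-q ^ (8 + 3 * s)) (q ^ 24) - q ^ s * qTheta (-q ^ (16 + 3 * s)) (q ^ 24)) := by
  have hquint := qTheta_mul_qTheta (pow_ne_zero 8 hq0) (norm_pow_lt_one hq (by norm_num))
    (pow_ne_zero s hq0)
  have hexp : q ^ 16 / q ^ (8 - 2 * s) = q ^ 8 * (q ^ s) ^ 2 := by
    rw [div_eq_iff (pow_ne_zero _ hq0), ← pow_mul, ← pow_add, ← pow_add]
    congr 1
    omega
  rw [Jam_eq_qTheta hq0 (by omega), Jam_eq_qTheta hq0 (by omega),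
    ← qTheta_div (pow_ne_zero 16 hq0) (q ^ (8 - 2 * s)), hexp, J]
  convert hquint using 2 <;> ring_nf

theorem qPochInf_neg_mul_J_mul_J {x : ℂ} (hx0 : x ≠ 0) (hx : ‖x‖ < 1) :
    qPochInf (-x) (x ^ 2) * (J (x ^ 2) 1 * J (x ^ 2) 16) =
      Jam (x ^ 2) 1 8 * Jam (x ^ 2) 6 16 + x * (Jam (x ^ 2) 3 8 * Jam (x ^ 2) 2 16) := by
  have hq := norm_pow_lt_one hx two_ne_zero
  have hq0 := pow_ne_zero 2 hx0
  have h48 : ‖x ^ 48‖ < 1 := norm_pow_lt_one hx (by norm_num)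
  have h480 : x ^ 48 ≠ 0 := pow_ne_zero 48 hx0
  have hprod := qPochInf_neg_mul_qPochInf_sq hx0 hx
  have hone := Jam_mul_Jam hq0 hq (s := 1) (by norm_num)
  have hthree := Jam_mul_Jam hq0 hq (s := 3) (by norm_num)
  have hdiv := qTheta_div h480 (-x ^ 10)
  have hdiv' := qTheta_div h480 (-x ^ 46)
  have hshift := mul_qTheta_mul_self (z := -x ^ 2) h480 h48 (neg_ne_zero.mpr hq0)
  rw [div_neg, ← pow_sub_mul_pow x (by norm_num : 10 ≤ 48),
    mul_div_cancel_right₀ _ (pow_ne_zero 10 hx0)] at hdiv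
  rw [div_neg, ← pow_sub_mul_pow x (by norm_num : 46 ≤ 48),
    mul_div_cancel_right₀ _ (pow_ne_zero 46 hx0)] at hdiv'
  norm_num at hone hthree hdiv hdiv'
  rw [hone, hthree, J, pow_one]
  ring_nf at hprod hdiv hdiv' hshift ⊢
  linear_combination J (x ^ 2) 16 * hprod + J (x ^ 2) 16 * x ^ 2 * hdiv +
    J (x ^ 2) 16 * x ^ 5 * (hdiv' - hshift)

theorem hasSum_even_and_odd {f : ℕ → ℂ} {s s' : ℂ} (hf : HasSum f s)
    (hf' : HasSum (fun n => (-1) ^ n * f n) s') :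
    HasSum (fun n => f (2 * n)) ((s + s') / 2) ∧
      HasSum (fun n => f (2 * n + 1)) ((s - s') / 2) := by
  have heven := (hf.summable.comp_injective (mul_right_injective₀ two_ne_zero)).hasSum
  have hodd := (hf.summable.comp_injective
    ((add_left_injective 1).comp (mul_right_injective₀ two_ne_zero))).hasSum
  simp only [Function.comp_apply, Function.comp_def] at heven hodd
  set a := ∑' n, f (2 * n)
  set b := ∑' n, f (2 * n + 1)
  have hs : a + b = s := (heven.even_add_odd hodd).unique hf
  have hs' : a - b = s' := by
    rw [sub_eq_add_neg]
    refine HasSum.unique (.even_add_odd ?_ ?_) hf'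
    · simpa using heven
    · simpa [pow_succ] using hodd.neg
  rw [show (s + s') / 2 = a by rw [← hs, ← hs']; ring,
    show (s - s') / 2 = b by rw [← hs, ← hs']; ring]
  exact ⟨heven, hodd⟩

theorem two_mul_choose_two_add_self (n : ℕ) : 2 * n.choose 2 + n = n ^ 2 := by
  induction n with
  | zero => rfl
  | succ n ih =>
    rw [Nat.choose_succ_succ' n 1, Nat.choose_one_right]
    linarith

theorem choose_two_mul_two (n : ℕ) : (2 * n).choose 2 + n = 2 * n ^ 2 := by
  linarith [two_mul_choose_two_add_self (2 * n)]

theorem bigQExpCoeff_sq_two_mul (x : ℂ) (n : ℕ) :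
    bigQExpCoeff (x ^ 2) x (2 * n) = (x ^ 2) ^ (2 * n ^ 2) / qPoch (x ^ 2) (x ^ 2) (2 * n) := by
  rw [bigQExpCoeff, pow_mul, ← pow_add, add_comm, choose_two_mul_two]

theorem bigQExpCoeff_sq_two_mul_add_one (x : ℂ) (n : ℕ) :
    bigQExpCoeff (x ^ 2) x (2 * n + 1) =
      x * ((x ^ 2) ^ (2 * n ^ 2 + 2 * n) / qPoch (x ^ 2) (x ^ 2) (2 * n + 1)) := by
  rw [bigQExpCoeff, ← choose_two_mul_two, Nat.choose_succ_succ', Nat.choose_one_right]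
  ring

theorem hasSum_slater {q : ℂ} (hq0 : q ≠ 0) (hq : ‖q‖ < 1) :
    HasSum (fun n : ℕ => q ^ (2 * n ^ 2) / qPoch q q (2 * n))
        (Jam q 1 8 * Jam q 6 16 / (J q 1 * J q 16)) ∧
      HasSum (fun n : ℕ => q ^ (2 * n ^ 2 + 2 * n) / qPoch q q (2 * n + 1))
        (Jam q 3 8 * Jam q 2 16 / (J q 1 * J q 16)) := by
  obtain ⟨x, rfl⟩ := IsAlgClosed.exists_pow_nat_eq q two_pos
  have hx0 : x ≠ 0 := (pow_ne_zero_iff two_ne_zero).mp hq0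
  have hx : ‖x‖ < 1 := by
    rw [norm_pow] at hq
    exact (pow_lt_one_iff_of_nonneg (norm_nonneg x) two_ne_zero).mp hq
  have hpos := hasSum_bigQExpCoeff_neg hq (-x)
  rw [neg_neg] at hpos
  have hneg : HasSum (fun n => (-1) ^ n * bigQExpCoeff (x ^ 2) x n) (qPochInf x (x ^ 2)) := by
    simpa only [← bigQExpCoeff_mul, mul_neg_one] using hasSum_bigQExpCoeff_neg hq x
  obtain ⟨heven, hodd⟩ := hasSum_even_and_odd hpos hneg
  have hJ : J (x ^ 2) 1 * J (x ^ 2) 16 ≠ 0 :=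
    mul_ne_zero (J_ne_zero hq one_ne_zero) (J_ne_zero hq (by norm_num))
  have hprod := qPochInf_neg_mul_J_mul_J hx0 hx
  have hprod' := qPochInf_neg_mul_J_mul_J (neg_ne_zero.mpr hx0) ((norm_neg x).trans_lt hx)
  rw [neg_neg, neg_sq] at hprod'
  simp only [bigQExpCoeff_sq_two_mul] at heven
  simp only [bigQExpCoeff_sq_two_mul_add_one] at hodd
  have heven_value : Jam (x ^ 2) 1 8 * Jam (x ^ 2) 6 16 / (J (x ^ 2) 1 * J (x ^ 2) 16) =
      (qPochInf (-x) (x ^ 2) + qPochInf x (x ^ 2)) / 2 := by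
    rw [div_eq_iff hJ]
    linear_combination (-1 / 2 : ℂ) * (hprod + hprod')
  have hodd_value : x * (Jam (x ^ 2) 3 8 * Jam (x ^ 2) 2 16 / (J (x ^ 2) 1 * J (x ^ 2) 16)) =
      (qPochInf (-x) (x ^ 2) - qPochInf x (x ^ 2)) / 2 := by
    rw [← mul_div_assoc, div_eq_iff hJ]
    linear_combination (-1 / 2 : ℂ) * (hprod - hprod')
  rw [← hasSum_mul_left_iff hx0 (f := fun n : ℕ => (x ^ 2) ^ (2 * n ^ 2 + 2 * n) / _),
    heven_value, hodd_value]
  exact ⟨heven, hodd⟩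

end Slater

section QDifferenceEquations

open PowerSeries

theorem coeff_mul_of_forall_lt_coeff_eq_zero {R : Type*} [CommSemiring R] {n : ℕ} (P : R⟦X⟧)
    {f : R⟦X⟧} (hf : ∀ m < n, coeff m f = 0) :
    coeff n (P * f) = constantCoeff P * coeff n f := by
  rw [coeff_mul, Finset.sum_eq_single (0, n)]
  · rw [coeff_zero_eq_constantCoeff_apply]
  · rintro ⟨i, j⟩ hij hne
    have hsum : i + j = n := by simpa using hij
    have hi : i ≠ 0 := by
      rintro rfl
      exact hne (by rw [← hsum, zero_add])
    rw [hf j (by lia), mul_zero]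
  · simp

theorem eq_of_mul_eq_mul_rescale {R : Type*} [CommRing R] [NoZeroDivisors R] {r : R}
    (hr : ∀ n ≠ 0, r ^ n ≠ 1) {P Q f g : R⟦X⟧} (hP : constantCoeff P = 1)
    (hQ : constantCoeff Q = 1) (hf : P * f = Q * rescale r f) (hg : P * g = Q * rescale r g)
    (hfg : constantCoeff f = constantCoeff g) : f = g := by
  rw [← sub_eq_zero]
  have hdiff : P * (f - g) = Q * rescale r (f - g) := by
    rw [map_sub]
    linear_combination hf - hg
  ext n
  induction n using Nat.strong_induction_on with
  | _ n ih =>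
    have hlow : ∀ m < n, coeff m (f - g) = 0 := ih
    have hlow' : ∀ m < n, coeff m (rescale r (f - g)) = 0 := fun m hm => by
      rw [coeff_rescale, hlow m hm, mul_zero]
    rcases eq_or_ne n 0 with rfl | hn
    · simp [hfg]
    · have hcoeff := congrArg (coeff n) hdiff
      rw [coeff_mul_of_forall_lt_coeff_eq_zero P hlow,
        coeff_mul_of_forall_lt_coeff_eq_zero Q hlow', hP, hQ, one_mul, one_mul,
        coeff_rescale] at hcoeff
      have hzero : (1 - r ^ n) * coeff n (f - g) = 0 := by linear_combination hcoeff
      exact (mul_eq_zero.mp hzero).resolve_left (sub_ne_zero.mpr (hr n hn).symm)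

theorem constantCoeff_rescale {R : Type*} [CommSemiring R] (r : R) (f : R⟦X⟧) :
    constantCoeff (rescale r f) = constantCoeff f := by
  rw [← coeff_zero_eq_constantCoeff_apply, coeff_rescale, pow_zero, one_mul,
    coeff_zero_eq_constantCoeff_apply]

theorem rescale_C {R : Type*} [CommSemiring R] (r c : R) : rescale r (C c) = C c := by
  ext n
  rw [coeff_rescale, coeff_C]
  split_ifs with hn <;> simp [hn]

theorem mk_bigQExpCoeff {p : ℂ} (hp : ‖p‖ < 1) (c : ℂ) :
    PowerSeries.mk (bigQExpCoeff p c) =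
      (1 + C c * X) * rescale p (PowerSeries.mk (bigQExpCoeff p c)) := by
  rw [add_mul, one_mul, mul_assoc, mul_left_comm]
  ext n
  cases n with
  | zero => simp [constantCoeff_rescale]
  | succ n =>
    simp only [map_add, coeff_succ_X_mul, coeff_rescale, coeff_C_mul, coeff_mk]
    linear_combination one_sub_pow_succ_mul_bigQExpCoeff_succ hp c n

theorem one_sub_mul_mk_pow_div_qPoch {p : ℂ} (hp : ‖p‖ < 1) (c : ℂ) :
    (1 - C c * X) * PowerSeries.mk (fun n => c ^ n / qPoch p p n) =
      rescale p (PowerSeries.mk fun n => c ^ n / qPoch p p n) := by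
  rw [sub_mul, one_mul, mul_assoc, mul_left_comm]
  ext n
  cases n with
  | zero => simp
  | succ n =>
    simp only [map_sub, coeff_succ_X_mul, coeff_rescale, coeff_C_mul, coeff_mk]
    linear_combination c ^ (n + 1) * one_sub_pow_succ_div_qPoch_succ hp n

/-- The summand `q^{(k-l)² + t(k-l)} / ((q²;q²)_k (q²;q²)_l)` of `gaussConv`. -/
noncomputable def gaussConvTerm (q : ℂ) (t : ℤ) (k l : ℕ) : ℂ :=
  q ^ (((k : ℤ) - l) ^ 2 + t * (k - l)) / (qPoch (q ^ 2) (q ^ 2) k * qPoch (q ^ 2) (q ^ 2) l)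

/-- The sums `∑_{k+l=n} q^{(k-l)² + t(k-l)} / ((q²;q²)_k (q²;q²)_l)`. The double sum over `k` and
`l` inside the quadruple series is the case `t = 1`; the shifts in `t` close its recurrence. -/
noncomputable def gaussConv (q : ℂ) (t : ℤ) (n : ℕ) : ℂ :=
  ∑ x ∈ antidiagonal n, gaussConvTerm q t x.1 x.2

theorem gaussConv_zero (q : ℂ) (t : ℤ) : gaussConv q t 0 = 1 := by
  simp [gaussConv, gaussConvTerm, qPoch_zero]

theorem gaussConvTerm_neg (q : ℂ) (t : ℤ) (k l : ℕ) :
    gaussConvTerm q (-t) k l = gaussConvTerm q t l k := by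
  unfold gaussConvTerm
  rw [mul_comm (qPoch _ _ k)]
  congr 2
  ring

theorem gaussConv_neg (q : ℂ) (t : ℤ) : gaussConv q (-t) = gaussConv q t := by
  funext n
  simp only [gaussConv, gaussConvTerm_neg]
  exact Finset.Nat.sum_antidiagonal_swap (f := fun x => gaussConvTerm q t x.1 x.2)

theorem gaussConvTerm_zero_left {q : ℂ} (hq0 : q ≠ 0) (t : ℤ) (l : ℕ) :
    gaussConvTerm q t 0 l = q ^ l * gaussConvTerm q (t + 1) 0 l := by
  unfold gaussConvTerm
  rw [← mul_div_assoc, ← zpow_natCast q l, ← zpow_add₀ hq0]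
  congr 2
  push_cast
  ring

theorem gaussConvTerm_succ_left {q : ℂ} (hq0 : q ≠ 0) (hq : ‖q‖ < 1) (t : ℤ) (k l : ℕ) :
    gaussConvTerm q t (k + 1) l = q ^ (k + l + 1) * gaussConvTerm q (t + 1) (k + 1) l +
      q ^ (1 + t) * gaussConvTerm q (t + 2) k l := by
  have hqPoch := one_sub_pow_succ_div_qPoch_succ (norm_pow_lt_one hq two_ne_zero) k
  have hleft : (((k + 1 : ℕ) : ℤ) - l) ^ 2 + t * ((k + 1 : ℕ) - l) =
      (1 + t) + (((k : ℤ) - l) ^ 2 + (t + 2) * (k - l)) := by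
    push_cast
    ring
  have hmid : ((k + l + 1 : ℕ) : ℤ) +
      ((((k + 1 : ℕ) : ℤ) - l) ^ 2 + (t + 1) * ((k + 1 : ℕ) - l)) =
        ((2 * (k + 1) : ℕ) : ℤ) + ((1 + t) + (((k : ℤ) - l) ^ 2 + (t + 2) * (k - l))) := by
    push_cast
    ring
  unfold gaussConvTerm
  rw [← mul_div_assoc (q ^ (k + l + 1)), ← mul_div_assoc (q ^ (1 + t)),
    ← zpow_natCast q (k + l + 1), ← zpow_add₀ hq0, ← zpow_add₀ hq0, hmid, hleft,
    zpow_add₀ hq0 (2 * (k + 1) : ℕ), zpow_natCast, pow_mul]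
  linear_combination q ^ ((1 + t) + (((k : ℤ) - l) ^ 2 + (t + 2) * (k - l))) /
    qPoch (q ^ 2) (q ^ 2) l * hqPoch

theorem gaussConv_succ {q : ℂ} (hq0 : q ≠ 0) (hq : ‖q‖ < 1) (t : ℤ) (n : ℕ) :
    gaussConv q t (n + 1) =
      q ^ (n + 1) * gaussConv q (t + 1) (n + 1) + q ^ (1 + t) * gaussConv q (t + 2) n := by
  have hterm : ∀ x ∈ antidiagonal n, gaussConvTerm q t (x.1 + 1) x.2 =
      q ^ (n + 1) * gaussConvTerm q (t + 1) (x.1 + 1) x.2 +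
        q ^ (1 + t) * gaussConvTerm q (t + 2) x.1 x.2 := fun x hx => by
    rw [gaussConvTerm_succ_left hq0 hq, mem_antidiagonal.mp hx]
  unfold gaussConv
  rw [Finset.Nat.sum_antidiagonal_succ, Finset.Nat.sum_antidiagonal_succ,
    gaussConvTerm_zero_left hq0, Finset.sum_congr rfl hterm, Finset.sum_add_distrib, mul_add,
    Finset.mul_sum, Finset.mul_sum, add_assoc]

theorem mk_gaussConv {q : ℂ} (hq0 : q ≠ 0) (hq : ‖q‖ < 1) (t : ℤ) :
    PowerSeries.mk (gaussConv q t) = rescale q (PowerSeries.mk (gaussConv q (t + 1))) +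
      X * (C (q ^ (1 + t)) * PowerSeries.mk (gaussConv q (t + 2))) := by
  ext n
  cases n with
  | zero => simp [gaussConv_zero, constantCoeff_rescale]
  | succ n =>
    rw [map_add, coeff_succ_X_mul, coeff_rescale, coeff_C_mul, coeff_mk, coeff_mk, coeff_mk,
      gaussConv_succ hq0 hq]

theorem one_sub_X_sq_mul_mk_gaussConv_zero {q : ℂ} (hq0 : q ≠ 0) (hq : ‖q‖ < 1) :
    (1 - X ^ 2) * PowerSeries.mk (gaussConv q 0) =
      (1 + C q * X) * rescale q (PowerSeries.mk (gaussConv q 1)) := by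
  have hzero := mk_gaussConv hq0 hq 0
  have hneg_two := mk_gaussConv hq0 hq (-2)
  norm_num [gaussConv_neg] at hzero hneg_two
  have hC : (C q⁻¹ : ℂ⟦X⟧) * C q = 1 := by rw [← map_mul, inv_mul_cancel₀ hq0, map_one]
  linear_combination hzero + X * C q * hneg_two + X ^ 2 * PowerSeries.mk (gaussConv q 0) * hC

theorem mul_rescale_mk_gaussConv_one {q : ℂ} (hq0 : q ≠ 0) (hq : ‖q‖ < 1) :
    (1 - C q * X) * (1 - C (q ^ 4) * X ^ 2) * rescale q (PowerSeries.mk (gaussConv q 1)) =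
      (1 + C (q ^ 3) * X) * rescale (q ^ 2) (rescale q (PowerSeries.mk (gaussConv q 1))) := by
  have hneg_one := mk_gaussConv hq0 hq (-1)
  norm_num [gaussConv_neg] at hneg_one
  have hfirst := congrArg (rescale q) hneg_one
  have hsecond := congrArg (rescale (q ^ 2)) (one_sub_X_sq_mul_mk_gaussConv_zero hq0 hq)
  simp only [map_sub, map_mul, map_add, map_pow, map_one, rescale_X, rescale_C, rescale_rescale,
    ← pow_two] at hfirst hsecond ⊢
  linear_combination (1 - C q ^ 4 * X ^ 2) * hfirst + hsecond

theorem mk_bigQExpCoeff_mul_rescale_mk_gaussConv {q : ℂ} (hq0 : q ≠ 0) (hq : ‖q‖ < 1) :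
    PowerSeries.mk (bigQExpCoeff (q ^ 2) (q ^ 2)) * rescale q (PowerSeries.mk (gaussConv q 1)) =
      PowerSeries.mk (bigQExpCoeff (q ^ 2) (q ^ 3)) *
        PowerSeries.mk (fun n => q ^ n / qPoch q q n) := by
  have hq2 : ‖q ^ 2‖ < 1 := norm_pow_lt_one hq two_ne_zero
  have hE := mk_bigQExpCoeff hq2 (q ^ 2)
  have hA := mk_bigQExpCoeff hq2 (q ^ 3)
  have hR := mul_rescale_mk_gaussConv_one hq0 hq
  have hB := one_sub_mul_mk_pow_div_qPoch hq q
  have hB' := congrArg (rescale q) hB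
  simp only [map_sub, map_mul, map_one, rescale_X, rescale_rescale, ← pow_two, rescale_C] at hB'
  refine eq_of_mul_eq_mul_rescale (r := q ^ 2)
    (P := (1 - C q * X) * (1 - C (q ^ 4) * X ^ 2))
    (Q := (1 + C (q ^ 2) * X) * (1 + C (q ^ 3) * X))
    (fun n hn h => one_sub_pow_ne_zero hq2 hn (by rw [h, sub_self])) (by simp) (by simp) ?_ ?_ ?_
  · rw [map_mul]
    linear_combination PowerSeries.mk (bigQExpCoeff (q ^ 2) (q ^ 2)) * hR +
      (1 + C (q ^ 3) * X) * rescale (q ^ 2) (rescale q (PowerSeries.mk (gaussConv q 1))) * hE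
  · rw [map_mul]
    simp only [map_pow] at hA hB hB' ⊢
    linear_combination (1 - C q * X) * (1 - C q ^ 4 * X ^ 2) *
      PowerSeries.mk (fun n => q ^ n / qPoch q q n) * hA + (1 + C q ^ 2 * X) * (1 + C q ^ 3 * X) *
      rescale (q ^ 2) (PowerSeries.mk (bigQExpCoeff (q ^ 2) (q ^ 3))) *
      ((1 - C q ^ 2 * X) * hB + hB')
  · simp [constantCoeff_rescale, gaussConv_zero, bigQExpCoeff_zero, qPoch_zero]

end QDifferenceEquations

section AntidiagonalSums

open PowerSeries

/-- A pair of natural numbers, together with a parameter, is the same as a point of the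
antidiagonal through it: the parametrised form of `Finset.sigmaAntidiagonalEquivProd`. -/
def sigmaAntidiagonalSndEquiv (ι : Type*) :
    (Σ p : ι × ℕ, antidiagonal p.2) ≃ ι × ℕ × ℕ where
  toFun s := (s.1.1, s.2.1)
  invFun x := ⟨(x.1, x.2.1 + x.2.2), ⟨x.2, mem_antidiagonal.mpr rfl⟩⟩
  left_inv := by
    rintro ⟨⟨i, n⟩, ⟨x, hx⟩⟩
    obtain rfl : x.1 + x.2 = n := mem_antidiagonal.mp hx
    rfl
  right_inv _ := rfl

theorem hasSum_sum_antidiagonal {ι M : Type*} [AddCommMonoid M] [TopologicalSpace M]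
    [ContinuousAdd M] [RegularSpace M] {f : ι × ℕ × ℕ → M} {s : M} (hf : HasSum f s) :
    HasSum (fun p : ι × ℕ => ∑ x ∈ antidiagonal p.2, f (p.1, x)) s := by
  refine ((sigmaAntidiagonalSndEquiv ι).hasSum_iff.mpr hf).sigma fun p => ?_
  rw [← Finset.sum_coe_sort]
  exact hasSum_fintype _

theorem hasSum_mul_coeff_mul {ι R : Type*} [CommSemiring R] [TopologicalSpace R]
    [ContinuousAdd R] [RegularSpace R] {w : ι → ℕ → R} {f g : R⟦X⟧} {s : R}
    (h : HasSum (fun x : ι × ℕ × ℕ =>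
      w x.1 (x.2.1 + x.2.2) * (coeff x.2.1 f * coeff x.2.2 g)) s) :
    HasSum (fun x : ι × ℕ => w x.1 x.2 * coeff x.2 (f * g)) s := by
  refine (hasSum_sum_antidiagonal h).congr_fun fun x => ?_
  rw [coeff_mul, Finset.mul_sum]
  exact Finset.sum_congr rfl fun y hy => by rw [mem_antidiagonal.mp hy]

end AntidiagonalSums

section QuadrupleSeries

open PowerSeries

/-- The factor `q^{(n-i)² + i² - 2i} / (q²;q²)_i` of the quadruple series, in which `j`, `k`, `l`
enter through `n = j + k + l` only. -/
noncomputable def outerWeight (q : ℂ) (i n : ℕ) : ℂ :=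
  q ^ (((n : ℤ) - i) ^ 2 + i ^ 2 - 2 * i) / qPoch (q ^ 2) (q ^ 2) i

/-- The summand of the quadruple series. -/
noncomputable def quadTerm (q : ℂ) (i j k l : ℕ) : ℂ :=
  q ^ ((2*(i:ℤ)^2 + 2*(j:ℤ)^2 + 2*(k:ℤ)^2 + 2*(l:ℤ)^2 - 2*(i:ℤ)*(j:ℤ) - 2*(i:ℤ)*(k:ℤ)
      - 2*(i:ℤ)*(l:ℤ) + 2*(j:ℤ)*(k:ℤ) + 2*(j:ℤ)*(l:ℤ) - 2*(i:ℤ) + (j:ℤ) + 2*(k:ℤ)) : ℤ) /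
    (qPoch (q ^ 2) (q ^ 2) i * qPoch (q ^ 2) (q ^ 2) j * qPoch (q ^ 2) (q ^ 2) k *
      qPoch (q ^ 2) (q ^ 2) l)

/-- The summand of the triple series to which the quadruple series reduces: `a` and `b` replace the
three indices `j`, `k`, `l`, with `j + k + l = a + b`. -/
noncomputable def tripleTerm (q : ℂ) (i a b : ℕ) : ℂ :=
  q ^ (((a : ℤ) + b - i) ^ 2 + i ^ 2 - 2 * i + a ^ 2 + 2 * a + b) /
    (qPoch (q ^ 2) (q ^ 2) i * qPoch (q ^ 2) (q ^ 2) a * qPoch q q b)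

theorem bigQExpCoeff_sq_pow (q : ℂ) (m n : ℕ) :
    bigQExpCoeff (q ^ 2) (q ^ (m + 1)) n = q ^ (n ^ 2 + m * n) / qPoch (q ^ 2) (q ^ 2) n := by
  rw [bigQExpCoeff, ← pow_mul, ← pow_mul, ← pow_add, ← two_mul_choose_two_add_self]
  ring

variable {q : ℂ}

theorem quadTerm_eq_outerWeight_mul (hq0 : q ≠ 0) (i j k l : ℕ) :
    quadTerm q i j k l = outerWeight q i (j + (k + l)) *
      (bigQExpCoeff (q ^ 2) (q ^ 2) j * (q ^ (k + l) * gaussConvTerm q 1 k l)) := by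
  have hexp : 2*(i:ℤ)^2 + 2*(j:ℤ)^2 + 2*(k:ℤ)^2 + 2*(l:ℤ)^2 - 2*(i:ℤ)*(j:ℤ) - 2*(i:ℤ)*(k:ℤ)
      - 2*(i:ℤ)*(l:ℤ) + 2*(j:ℤ)*(k:ℤ) + 2*(j:ℤ)*(l:ℤ) - 2*(i:ℤ) + (j:ℤ) + 2*(k:ℤ) =
      (((j + (k + l) : ℕ) : ℤ) - i) ^ 2 + i ^ 2 - 2 * i + ((j ^ 2 + 1 * j : ℕ) +
        ((k + l : ℕ) + (((k : ℤ) - l) ^ 2 + 1 * (k - l)))) := by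
    push_cast
    ring
  unfold quadTerm outerWeight gaussConvTerm
  rw [hexp, bigQExpCoeff_sq_pow q 1, zpow_add₀ hq0, zpow_add₀ hq0 (j ^ 2 + 1 * j : ℕ),
    zpow_add₀ hq0 (k + l : ℕ), zpow_natCast, zpow_natCast]
  ring

theorem tripleTerm_eq_outerWeight_mul (hq0 : q ≠ 0) (i a b : ℕ) :
    tripleTerm q i a b = outerWeight q i (a + b) *
      (bigQExpCoeff (q ^ 2) (q ^ 3) a * (q ^ b / qPoch q q b)) := by
  have hexp : ((a : ℤ) + b - i) ^ 2 + i ^ 2 - 2 * i + a ^ 2 + 2 * a + b =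
      (((a + b : ℕ) : ℤ) - i) ^ 2 + i ^ 2 - 2 * i + ((a ^ 2 + 2 * a : ℕ) + b) := by
    push_cast
    ring
  unfold tripleTerm outerWeight
  rw [hexp, bigQExpCoeff_sq_pow q 2, zpow_add₀ hq0, zpow_add₀ hq0 (a ^ 2 + 2 * a : ℕ),
    zpow_natCast, zpow_natCast]
  ring

theorem summable_pow_fst_add {α : Type*} {r : ℝ} (hr0 : 0 ≤ r) (hr1 : r < 1) {f : α → ℕ}
    (hf : Summable fun x => r ^ f x) : Summable fun x : ℕ × α => r ^ (x.1 + f x.2) := by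
  simp only [pow_add]
  exact (summable_geometric_of_lt_one hr0 hr1).mul_of_nonneg hf (fun _ => by positivity)
    fun _ => by positivity

theorem summable_zpow_div_of_le {ι : Type*} (hq0 : q ≠ 0) (hq : ‖q‖ < 1) {E : ι → ℤ}
    {N : ι → ℕ} {c : ℤ} {W : ι → ℂ} {C : ℝ} (hN : Summable fun x => ‖q‖ ^ N x)
    (hE : ∀ x, N x + c ≤ E x) (hW : ∀ x, ‖(W x)⁻¹‖ ≤ C) : Summable fun x => q ^ E x / W x := by
  have hpos : 0 < ‖q‖ := norm_pos_iff.mpr hq0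
  refine Summable.of_norm_bounded (hN.mul_right (‖q‖ ^ c * C)) fun x => ?_
  calc ‖q ^ E x / W x‖ = ‖q‖ ^ E x * ‖(W x)⁻¹‖ := by rw [div_eq_mul_inv, norm_mul, norm_zpow]
    _ ≤ ‖q‖ ^ ((N x : ℤ) + c) * C :=
      mul_le_mul (zpow_le_zpow_right_of_le_one₀ hpos hq.le (hE x)) (hW x) (norm_nonneg _)
        (by positivity)
    _ = ‖q‖ ^ N x * (‖q‖ ^ c * C) := by rw [zpow_add₀ hpos.ne', zpow_natCast, mul_assoc]

theorem summable_quadTerm (hq0 : q ≠ 0) (hq : ‖q‖ < 1) :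
    Summable fun x : ℕ × ℕ × ℕ × ℕ => quadTerm q x.1 x.2.1 x.2.2.1 x.2.2.2 := by
  obtain ⟨C, hC0, hC⟩ := exists_norm_inv_qPoch_self_le (norm_pow_lt_one hq two_ne_zero)
  have hgeom := summable_geometric_of_lt_one (norm_nonneg q) hq
  have hgeom_two := summable_pow_fst_add (norm_nonneg q) hq hgeom
  have hgeom_three := summable_pow_fst_add (norm_nonneg q) hq hgeom_two
  have hgeom_four := summable_pow_fst_add (norm_nonneg q) hq hgeom_three
  refine summable_zpow_div_of_le hq0 hq (c := -3) (C := C * C * C * C) hgeom_four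
    (fun x => ?_) fun x => ?_
  · obtain ⟨i, j, k, l⟩ := x
    have hkl : (0 : ℤ) ≤ ((k : ℤ) - l) * (k - l + 1) := by
      rcases le_or_gt 0 ((k : ℤ) - l) with h | h <;> nlinarith
    have hi : (0 : ℤ) ≤ ((i : ℤ) - 1) * (i - 2) := by
      rcases le_or_gt 2 (i : ℤ) with h | h <;> nlinarith
    push_cast
    nlinarith [sq_nonneg ((j : ℤ) + k + l - i), sq_nonneg (j : ℤ)]
  · simp only [mul_inv, norm_mul]
    gcongr <;> apply hC

theorem summable_tripleTerm (hq0 : q ≠ 0) (hq : ‖q‖ < 1) :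
    Summable fun x : ℕ × ℕ × ℕ => tripleTerm q x.1 x.2.1 x.2.2 := by
  obtain ⟨C, hC0, hC⟩ := exists_norm_inv_qPoch_self_le (norm_pow_lt_one hq two_ne_zero)
  obtain ⟨D, -, hD⟩ := exists_norm_inv_qPoch_self_le hq
  have hgeom := summable_geometric_of_lt_one (norm_nonneg q) hq
  have hgeom_two := summable_pow_fst_add (norm_nonneg q) hq hgeom
  have hgeom_three := summable_pow_fst_add (norm_nonneg q) hq hgeom_two
  refine summable_zpow_div_of_le hq0 hq (c := -3) (C := C * C * D) hgeom_three
    (fun x => ?_) fun x => ?_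
  · obtain ⟨i, a, b⟩ := x
    have hi : (0 : ℤ) ≤ ((i : ℤ) - 1) * (i - 2) := by
      rcases le_or_gt 2 (i : ℤ) with h | h <;> nlinarith
    push_cast
    nlinarith [sq_nonneg ((a : ℤ) + b - i), sq_nonneg (a : ℤ)]
  · simp only [mul_inv, norm_mul]
    gcongr
    exacts [hC _, hC _, hD _]

theorem tsum_quadTerm_eq_tsum_tripleTerm (hq0 : q ≠ 0) (hq : ‖q‖ < 1) :
    ∑' x : ℕ × ℕ × ℕ × ℕ, quadTerm q x.1 x.2.1 x.2.2.1 x.2.2.2 =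
      ∑' x : ℕ × ℕ × ℕ, tripleTerm q x.1 x.2.1 x.2.2 := by
  have hinner := hasSum_sum_antidiagonal
    ((Equiv.prodAssoc ℕ ℕ (ℕ × ℕ)).hasSum_iff.mpr (summable_quadTerm hq0 hq).hasSum)
  rw [← (Equiv.prodAssoc ℕ ℕ ℕ).symm.hasSum_iff] at hinner
  have hquad := hasSum_mul_coeff_mul (w := outerWeight q)
    (f := PowerSeries.mk (bigQExpCoeff (q ^ 2) (q ^ 2)))
    (g := rescale q (PowerSeries.mk (gaussConv q 1))) (hinner.congr_fun fun x => by
      simp only [Function.comp_apply, Equiv.prodAssoc_symm_apply, Equiv.prodAssoc_apply,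
        coeff_rescale, coeff_mk, gaussConv, Finset.mul_sum]
      refine Finset.sum_congr rfl fun y hy => ?_
      rw [quadTerm_eq_outerWeight_mul hq0, mem_antidiagonal.mp hy])
  have htriple := hasSum_mul_coeff_mul (w := outerWeight q)
    (f := PowerSeries.mk (bigQExpCoeff (q ^ 2) (q ^ 3)))
    (g := PowerSeries.mk (fun n => q ^ n / qPoch q q n))
    ((summable_tripleTerm hq0 hq).hasSum.congr_fun fun x => by
      rw [tripleTerm_eq_outerWeight_mul hq0, coeff_mk, coeff_mk])
  rw [mk_bigQExpCoeff_mul_rescale_mk_gaussConv hq0 hq] at hquad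
  exact hquad.unique htriple

theorem thetaTerm_neg_pow_pow (hq0 : q ≠ 0) (a b : ℕ) (n : ℤ) :
    thetaTerm (-q ^ a) (q ^ (2 * b)) n = q ^ (a * n + b * (n * (n - 1))) := by
  rw [thetaTerm, neg_neg, ← zpow_natCast q a, ← zpow_natCast q (2 * b), ← zpow_mul, ← zpow_mul,
    ← zpow_add₀ hq0]
  congr 1
  push_cast
  linear_combination b * two_mul_ediv_two_mul_pred n

theorem hasSum_tripleTerm_fiber (hq0 : q ≠ 0) (hq : ‖q‖ < 1) (b : ℕ) :
    HasSum (fun x : ℕ × ℕ => tripleTerm q x.2 x.1 b)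
      (q ^ (b ^ 2 + b) / qPoch q q b * qTheta (-q ^ (2 * b + 4)) (q ^ 4) / J q 2) := by
  have hscale : q ^ (b ^ 2 + b) / qPoch q q b ≠ 0 :=
    div_ne_zero (pow_ne_zero _ hq0) (qPoch_self_ne_zero hq b)
  have hterm (x : ℕ × ℕ) : tripleTerm q x.2 x.1 b = q ^ (b ^ 2 + b) / qPoch q q b *
      (thetaTerm (-q ^ (2 * b + 4)) (q ^ 4) (x.1 - x.2) * durfeeTerm (q ^ 2) x.1 x.2) := by
    obtain ⟨a, i⟩ := x
    have hexp : ((a : ℤ) + b - i) ^ 2 + i ^ 2 - 2 * i + a ^ 2 + 2 * a + b = (b ^ 2 + b : ℕ) +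
        (((2 * b + 4 : ℕ) * ((a : ℤ) - i) + (2 : ℕ) * ((a - i) * (a - i - 1))) +
          (2 * (a * i) : ℕ)) := by
      push_cast
      ring
    simp only [tripleTerm, durfeeTerm]
    rw [thetaTerm_neg_pow_pow hq0 (2 * b + 4) 2, hexp, zpow_add₀ hq0, zpow_add₀ hq0, zpow_natCast,
      zpow_natCast, pow_mul q 2 (a * i)]
    ring
  have hfiber : Summable fun x : ℕ × ℕ => tripleTerm q x.2 x.1 b :=
    (summable_tripleTerm hq0 hq).comp_injective (i := fun x : ℕ × ℕ => (x.2, x.1, b))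
      fun _ _ h => Prod.ext (congrArg (·.2.1) h) (congrArg (·.1) h)
  simp only [hterm] at hfiber ⊢
  obtain ⟨s, hs⟩ := (summable_mul_left_iff hscale).mp hfiber
  have htheta := (hasSum_of_sub_mul_durfeeTerm (norm_pow_lt_one hq two_ne_zero) hs).unique
    (hasSum_thetaTerm (pow_ne_zero 4 hq0) (norm_pow_lt_one hq four_ne_zero)
      (neg_ne_zero.mpr (pow_ne_zero (2 * b + 4) hq0)))
  rw [← htheta, mul_div_assoc, J,
    mul_div_cancel_right₀ s (qPochInf_self_ne_zero (norm_pow_lt_one hq two_ne_zero))]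
  exact hs.mul_left _

theorem pow_mul_qTheta_neg_pow (hq0 : q ≠ 0) (hq : ‖q‖ < 1) (a m : ℕ) :
    q ^ (2 * m ^ 2 + a * m) * qTheta (-q ^ (4 * m + a)) (q ^ 4) =
      q ^ (2 * m) * qTheta (-q ^ a) (q ^ 4) := by
  have hshift := thetaTerm_mul_qTheta (pow_ne_zero 4 hq0) (norm_pow_lt_one hq four_ne_zero)
    (neg_ne_zero.mpr (pow_ne_zero a hq0)) m
  rw [thetaTerm_neg_pow_pow hq0 a 2, zpow_natCast, ← pow_mul, mul_neg, ← pow_add] at hshift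
  rw [← hshift, ← mul_assoc, ← zpow_natCast q (2 * m), ← zpow_add₀ hq0, ← zpow_natCast]
  congr 2
  push_cast
  ring

theorem pow_mul_qTheta_neg_pow_even (hq0 : q ≠ 0) (hq : ‖q‖ < 1) (n : ℕ) :
    q ^ ((2 * n) ^ 2 + 2 * n) * qTheta (-q ^ (2 * (2 * n) + 4)) (q ^ 4) =
      q ^ (2 * n ^ 2) * qTheta (-q ^ 4) (q ^ 4) := by
  apply mul_left_cancel₀ (pow_ne_zero (2 * n) hq0)
  rw [show 2 * (2 * n) + 4 = 4 * n + 4 by ring]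
  linear_combination q ^ (2 * n ^ 2) * pow_mul_qTheta_neg_pow hq0 hq 4 n

theorem pow_mul_qTheta_neg_pow_odd (hq0 : q ≠ 0) (hq : ‖q‖ < 1) (n : ℕ) :
    q ^ ((2 * n + 1) ^ 2 + (2 * n + 1)) * qTheta (-q ^ (2 * (2 * n + 1) + 4)) (q ^ 4) =
      q ^ (2 * n ^ 2 + 2 * n) * qTheta (-q ^ 2) (q ^ 4) := by
  apply mul_left_cancel₀ (pow_ne_zero (2 * (n + 1)) hq0)
  rw [show 2 * (2 * n + 1) + 4 = 4 * (n + 1) + 2 by ring]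
  linear_combination q ^ (2 * n ^ 2 + 2 * n) * pow_mul_qTheta_neg_pow hq0 hq 2 (n + 1)

theorem hasSum_tripleTerm (hq0 : q ≠ 0) (hq : ‖q‖ < 1) :
    HasSum (fun x : ℕ × ℕ × ℕ => tripleTerm q x.1 x.2.1 x.2.2)
      (Jam q 1 8 * Jam q 6 16 / (J q 1 * J q 16) * (qTheta (-q ^ 4) (q ^ 4) / J q 2) +
        Jam q 3 8 * Jam q 2 16 / (J q 1 * J q 16) * (qTheta (-q ^ 2) (q ^ 4) / J q 2)) := by
  obtain ⟨hslater_even, hslater_odd⟩ := hasSum_slater hq0 hq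
  have hparity : HasSum
      (fun b : ℕ => q ^ (b ^ 2 + b) / qPoch q q b * qTheta (-q ^ (2 * b + 4)) (q ^ 4) / J q 2)
      (Jam q 1 8 * Jam q 6 16 / (J q 1 * J q 16) * (qTheta (-q ^ 4) (q ^ 4) / J q 2) +
        Jam q 3 8 * Jam q 2 16 / (J q 1 * J q 16) * (qTheta (-q ^ 2) (q ^ 4) / J q 2)) := by
    refine ((hslater_even.mul_right _).congr_fun fun n => ?_).even_add_odd
      ((hslater_odd.mul_right _).congr_fun fun n => ?_)
    · rw [div_mul_eq_mul_div, pow_mul_qTheta_neg_pow_even hq0 hq]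
      ring
    · rw [div_mul_eq_mul_div, pow_mul_qTheta_neg_pow_odd hq0 hq]
      ring
  let reverse : Equiv.Perm (ℕ × ℕ × ℕ) :=
    Function.Involutive.toPerm (fun x => (x.2.2, x.2.1, x.1)) fun _ => rfl
  have htriple := (summable_tripleTerm hq0 hq).hasSum
  have hfibers := (reverse.hasSum_iff.mpr htriple).prod_fiberwise
    fun b => hasSum_tripleTerm_fiber hq0 hq b
  rwa [hfibers.unique hparity] at htriple

theorem hasSum_quadTerm (hq0 : q ≠ 0) (hq : ‖q‖ < 1) :
    HasSum (fun x : ℕ × ℕ × ℕ × ℕ => quadTerm q x.1 x.2.1 x.2.2.1 x.2.2.2)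
      (Jam q 1 8 * Jam q 6 16 / (J q 1 * J q 16) * (qTheta (-q ^ 4) (q ^ 4) / J q 2) +
        Jam q 3 8 * Jam q 2 16 / (J q 1 * J q 16) * (qTheta (-q ^ 2) (q ^ 4) / J q 2)) := by
  rw [← (hasSum_tripleTerm hq0 hq).tsum_eq, ← tsum_quadTerm_eq_tsum_tripleTerm hq0 hq]
  exact (summable_quadTerm hq0 hq).hasSum

end QuadrupleSeries

theorem stmt_5 (q : ℂ) (h0 : 0 < ‖q‖) (h1 : ‖q‖ < 1) :
    (∑' p : ℕ × ℕ × ℕ × ℕ,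
      (fun (i j k l : ℕ) =>
        q ^ ((2*(i:ℤ)^2 + 2*(j:ℤ)^2 + 2*(k:ℤ)^2 + 2*(l:ℤ)^2 - 2*(i:ℤ)*(j:ℤ) - 2*(i:ℤ)*(k:ℤ) - 2*(i:ℤ)*(l:ℤ) + 2*(j:ℤ)*(k:ℤ) + 2*(j:ℤ)*(l:ℤ) - 2*(i:ℤ) + (j:ℤ) + 2*(k:ℤ)) : ℤ) /
          (qPoch (q ^ 2) (q ^ 2) i * qPoch (q ^ 2) (q ^ 2) j * qPoch (q ^ 2) (q ^ 2) k * qPoch (q ^ 2) (q ^ 2) l))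
        p.1 p.2.1 p.2.2.1 p.2.2.2)
    = (1 / (J q 1 * J q 2 * J q 16)) *
      (2 * (J q 8)^2 * Jam q 1 8 * Jam q 6 16 / J q 4
        + (J q 4)^5 * Jam q 3 8 * Jam q 2 16 / ((J q 2)^2 * (J q 8)^2)) := by
  have hq0 : q ≠ 0 := norm_pos_iff.mp h0
  have htheta_even : qTheta (-q ^ 4) (q ^ 4) = 2 * J q 8 ^ 2 / J q 4 := by
    rw [qTheta_neg_self (pow_ne_zero 4 hq0) (norm_pow_lt_one h1 four_ne_zero), ← pow_mul]
    rfl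
  have htheta_odd : qTheta (-q ^ 2) (q ^ 4) = J q 4 ^ 5 / (J q 2 ^ 2 * J q 8 ^ 2) := by
    have h := qTheta_neg_sq (pow_ne_zero 2 hq0) (norm_pow_lt_one h1 two_ne_zero)
    rwa [← pow_mul, ← pow_mul] at h
  refine (hasSum_quadTerm hq0 h1).tsum_eq.trans ?_
  rw [htheta_even, htheta_odd]
  ring
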